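/- arXiv:2410.02213 — 4 statements merged into one kernel-verified Lean document; each statement's English description precedes it below -/
import Mathlib

section
/- Let G be a finite simple graph with vertex set V and edge set E, and let ε : V → {1, −1} ⊆ ℂ. The operators ½(id + ε_v A_v) for v ∈ V pairwise commute, and their composition over all v ∈ V equals 2^{−|V|} Σ_{c ∈ 𝔽₂^V} ε(c) X(c, δc), where ε(c) = ∏_{v : c(v)=1} ε_v. -/
open Finset

variable {V : Type*} [Fintype V] [DecidableEq V]

/-- The boundary map `∂ : 𝔽₂^E → 𝔽₂^V` of a simple graph, sending the indicator of an edge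
to the sum of the indicators of its endpoints. -/
def bd (G : SimpleGraph V) [Fintype G.edgeSet] :
    (G.edgeSet → ZMod 2) →ₗ[ZMod 2] (V → ZMod 2) where
  toFun x := fun v => ∑ e : G.edgeSet, if v ∈ (e : Sym2 V) then x e else 0
  map_add' x y := by
    funext v
    simp only [Pi.add_apply]
    rw [← Finset.sum_add_distrib]
    exact Finset.sum_congr rfl fun e _ => by split <;> simp
  map_smul' r x := by
    funext v
    simp only [Pi.smul_apply, smul_eq_mul, RingHom.id_apply]
    rw [Finset.mul_sum]
    exact Finset.sum_congr rfl fun e _ => by split <;> simp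

/-- The coboundary map `δ : 𝔽₂^V → 𝔽₂^E` of a simple graph (the transpose of `∂`):
`(δ c) e = c u + c v` where `u, v` are the endpoints of `e`. -/
def cobd (G : SimpleGraph V) [Fintype G.edgeSet] :
    (V → ZMod 2) →ₗ[ZMod 2] (G.edgeSet → ZMod 2) where
  toFun c := fun e => ∑ v : V, if v ∈ (e : Sym2 V) then c v else 0
  map_add' x y := by
    funext e
    simp only [Pi.add_apply]
    rw [← Finset.sum_add_distrib]
    exact Finset.sum_congr rfl fun v _ => by split <;> simp
  map_smul' r x := by
    funext e
    simp only [Pi.smul_apply, smul_eq_mul, RingHom.id_apply]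
    rw [Finset.mul_sum]
    exact Finset.sum_congr rfl fun v _ => by split <;> simp

/-- The Hilbert space of the vertex and edge qubits: complex functions on
`𝔽₂^V × 𝔽₂^E` classical configurations. -/
abbrev Hsp (V E : Type*) : Type _ := ((V → ZMod 2) × (E → ZMod 2)) → ℂ

/-- The Pauli-X operator `X(a,b)`, acting by translation:
`(X(a,b) F)(s,t) = F(s + a, t + b)`. -/
def PX {V E : Type*} (a : V → ZMod 2) (b : E → ZMod 2) : Module.End ℂ (Hsp V E) where
  toFun F := fun p => F (p.1 + a, p.2 + b)
  map_add' _ _ := rfl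
  map_smul' _ _ := rfl

/-- The Gauss's law operator `A_v = X(1_v, δ 1_v)`. -/
def gaussA {V : Type*} [Fintype V] [DecidableEq V] (G : SimpleGraph V)
    [Fintype G.edgeSet] (v : V) : Module.End ℂ (Hsp V G.edgeSet) :=
  PX (fun w => if w = v then 1 else 0) (cobd G (fun w => if w = v then 1 else 0))

/-!
The map `c ↦ X(c, δc)` is a representation of the group `𝔽₂^V`, so it extends to an algebra
homomorphism out of the group algebra `ℂ[𝔽₂^V]`, under which the element `½(1 + ε_v [1_v])` maps to
the `v`-th projector. The group algebra is commutative, hence the projectors commute, and expanding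
`∏_v (1 + ε_v [1_v])` there produces one term `ε(c) [c]` for each choice `c` of a summand in every
factor.
-/

section GroupAlgebra

open AddMonoidAlgebra Multiplicative

variable {ι R A : Type*} [CommSemiring R] [Semiring A] [Algebra R A]

theorem prod_sum_single_piSingle [Fintype ι] [DecidableEq ι] {M : ι → Type*}
    [∀ i, AddCommMonoid (M i)] [∀ i, Fintype (M i)] (w : ∀ i, M i → R) :
    ∏ i, ∑ x, single (Pi.single i x) (w i x) = ∑ c : ∀ i, M i, single c (∏ i, w i (c i)) := by
  simp only [Fintype.prod_sum, prod_single, univ_sum_single]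

theorem one_add_single_eq_sum_zmod_two {M : Type*} [AddZeroClass M] (f : ZMod 2 →+ M) (a : R) :
    1 + single (f 1) a = ∑ x : ZMod 2, single (f x) (if x = 1 then a else 1) := by
  have sum_zmod_two : ∀ g : ZMod 2 → AddMonoidAlgebra R M, ∑ x, g x = g 0 + g 1 :=
    Fin.sum_univ_two
  simp [sum_zmod_two, one_def]

theorem prod_one_add_single_piSingle [Fintype ι] [DecidableEq ι] (ε : ι → R) :
    ∏ i, (1 + single (Pi.single i (1 : ZMod 2)) (ε i)) =
      ∑ c : ι → ZMod 2, single c (∏ i with c i = 1, ε i) := by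
  calc ∏ i, (1 + single (Pi.single i (1 : ZMod 2)) (ε i))
      = ∏ i, ∑ x : ZMod 2, single (Pi.single i x) (if x = 1 then ε i else 1) :=
        prod_congr rfl fun i _ =>
          one_add_single_eq_sum_zmod_two (AddMonoidHom.single (fun _ => ZMod 2) i) (ε i)
    _ = ∑ c : ι → ZMod 2, single c (∏ i, if c i = 1 then ε i else 1) :=
        prod_sum_single_piSingle _
    _ = ∑ c : ι → ZMod 2, single c (∏ i with c i = 1, ε i) := by
        simp only [prod_filter]

theorem lift_smul_one_add_single {M : Type*} [AddMonoid M] (φ : Multiplicative M →* A)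
    (r a : R) (x : M) :
    lift R A M φ (r • (1 + single x a)) = r • (1 + a • φ (ofAdd x)) := by
  simp only [map_smul, map_add, map_one, lift_single]

theorem commute_smul_one_add_smul {M : Type*} [AddCommMonoid M] (φ : Multiplicative M →* A)
    (r s a b : R) (x y : M) :
    Commute (r • (1 + a • φ (ofAdd x))) (s • (1 + b • φ (ofAdd y))) := by
  simp only [← lift_smul_one_add_single]
  exact (Commute.all _ _).map _

theorem list_prod_smul_one_add_smul [Fintype ι] [DecidableEq ι]
    (φ : Multiplicative (ι → ZMod 2) →* A) (r : R) (ε : ι → R) :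
    (univ.toList.map fun i => r • (1 + ε i • φ (ofAdd (Pi.single i 1)))).prod =
      r ^ Fintype.card ι • ∑ c : ι → ZMod 2, (∏ i with c i = 1, ε i) • φ (ofAdd c) := by
  calc (univ.toList.map fun i => r • (1 + ε i • φ (ofAdd (Pi.single i 1)))).prod
      = lift R A _ φ (∏ i, r • (1 + single (Pi.single i 1) (ε i))) := by
        simp only [← lift_smul_one_add_single, ← prod_map_toList, map_list_prod, List.map_map,
          Function.comp_def]
    _ = lift R A _ φ (r ^ Fintype.card ι • ∑ c, single c (∏ i with c i = 1, ε i)) := by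
        rw [← smul_prod, prod_one_add_single_piSingle, card_univ]
    _ = r ^ Fintype.card ι • ∑ c : ι → ZMod 2, (∏ i with c i = 1, ε i) • φ (ofAdd c) := by
        simp only [map_smul, map_sum, lift_single]

end GroupAlgebra

theorem PX_zero {V E : Type*} : PX (0 : V → ZMod 2) (0 : E → ZMod 2) = 1 := by
  ext1 F
  funext p
  simp [PX]

theorem PX_add {V E : Type*} (a a' : V → ZMod 2) (b b' : E → ZMod 2) :
    PX (a + a') (b + b') = PX a b * PX a' b' := by
  ext1 F
  funext p
  simp [PX, add_assoc]

/-- The representation `c ↦ X(c, δc)` of the group `𝔽₂^V` of gauge transformations. The group is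
written multiplicatively so that `AddMonoidAlgebra.lift` applies to it. -/
def gaugeRep (G : SimpleGraph V) [Fintype G.edgeSet] :
    Multiplicative (V → ZMod 2) →* Module.End ℂ (Hsp V G.edgeSet) where
  toFun c := PX c.toAdd (cobd G c.toAdd)
  map_one' := by rw [toAdd_one, map_zero, PX_zero]
  map_mul' c c' := by rw [toAdd_mul, map_add, PX_add]

theorem gaugeRep_ofAdd (G : SimpleGraph V) [Fintype G.edgeSet] (c : V → ZMod 2) :
    gaugeRep G (Multiplicative.ofAdd c) = PX c (cobd G c) :=
  rfl

theorem gaussA_eq_gaugeRep (G : SimpleGraph V) [Fintype G.edgeSet] (v : V) :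
    gaussA G v = gaugeRep G (Multiplicative.ofAdd (Pi.single v 1)) := by
  have indicator_eq : (fun w => if w = v then 1 else 0) = (Pi.single v 1 : V → ZMod 2) :=
    funext fun w => (Pi.single_apply v 1 w).symm
  rw [gaussA, indicator_eq, gaugeRep_ofAdd]

theorem gauss_projectors_prod_general {V : Type*} [Fintype V] [DecidableEq V]
    (G : SimpleGraph V) [Fintype G.edgeSet]
    (ε : V → ℂ) :
    (∀ v w : V,
      ((2⁻¹ : ℂ) • (1 + ε v • gaussA G v)) * ((2⁻¹ : ℂ) • (1 + ε w • gaussA G w))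
        = ((2⁻¹ : ℂ) • (1 + ε w • gaussA G w)) * ((2⁻¹ : ℂ) • (1 + ε v • gaussA G v))) ∧
    (Finset.univ.toList.map (fun v => (2⁻¹ : ℂ) • (1 + ε v • gaussA G v))).prod
      = ((2 : ℂ) ^ Fintype.card V)⁻¹ •
          ∑ c : V → ZMod 2,
            (∏ v ∈ Finset.univ.filter (fun v => c v = 1), ε v) • PX c (cobd G c) := by
  simp only [gaussA_eq_gaugeRep, ← gaugeRep_ofAdd, ← inv_pow]
  exact ⟨fun v w => commute_smul_one_add_smul (gaugeRep G) _ _ _ _ _ _,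
    list_prod_smul_one_add_smul (gaugeRep G) _ ε⟩

/-- For measurement outcomes `ε : V → {1, −1} ⊆ ℂ`, the projectors
`½(id + ε_v A_v)` pairwise commute and their composition over all vertices equals
`2^{−|V|} Σ_{c ∈ 𝔽₂^V} ε(c) X(c, δc)`, where `ε(c) = ∏_{v : c v = 1} ε v`. -/
theorem gauss_projectors_prod {V : Type*} [Fintype V] [DecidableEq V]
    (G : SimpleGraph V) [Fintype G.edgeSet]
    (ε : V → ℂ) (hε : ∀ v, ε v = 1 ∨ ε v = -1) :
    (∀ v w : V,
      ((2⁻¹ : ℂ) • (1 + ε v • gaussA G v)) * ((2⁻¹ : ℂ) • (1 + ε w • gaussA G w))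
        = ((2⁻¹ : ℂ) • (1 + ε w • gaussA G w)) * ((2⁻¹ : ℂ) • (1 + ε v • gaussA G v))) ∧
    (Finset.univ.toList.map (fun v => (2⁻¹ : ℂ) • (1 + ε v • gaussA G v))).prod
      = ((2 : ℂ) ^ Fintype.card V)⁻¹ •
          ∑ c : V → ZMod 2,
            (∏ v ∈ Finset.univ.filter (fun v => c v = 1), ε v) • PX c (cobd G c) :=
  gauss_projectors_prod_general G ε
end

section
/- Let G be a finite connected simple graph with nonempty vertex set V and edge set E, let ε : V → {1, −1}, and set σ = ∏_{v∈V} ε_v. If c', c'' ∈ 𝔽₂^V satisfy δc' = δc'', then either c'' = c' or c'' = c' + 1_V, and in both cases ε(c') · X_V(c') ∘ (id + σ L_V) = ε(c'') · X_V(c'') ∘ (id + σ L_V) as linear operators on H_V, where L_V = X_V(1_V). Hence the post-measurement state produced by the gauging measurement is independent of the choice of byproduct operator X_V(c') with δc' = z. -/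
open Finset

variable {V : Type*} [Fintype V] [DecidableEq V]

/-- The Hilbert space of the vertex qubits alone. -/
abbrev HV (V : Type*) : Type _ := (V → ZMod 2) → ℂ

/-- The Pauli-X operator `X_V(a)` on the vertex qubits: `(X_V(a) f)(s) = f(s + a)`. -/
def PXV {V : Type*} (a : V → ZMod 2) : Module.End ℂ (HV V) where
  toFun f := fun s => f (s + a)
  map_add' _ _ := rfl
  map_smul' _ _ := rfl

/-!
The kernel of `δ` on a connected graph consists of `0` and `1_V`, so two vectors with the same
coboundary differ by `0` or `1_V`. Replacing `c` by `c + 1_V` multiplies `ε(c)` by `σ`, because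
`ε` is its own inverse, and multiplies `X_V(c)` on the right by `L_V`. As `L_V² = 1` and `σ² = 1`,
the operator `L_V` acts on `id + σ L_V` as the scalar `σ`, so the two factors of `σ` cancel.
-/

theorem eq_of_preconnected_of_forall_adj {V α : Type*} {G : SimpleGraph V}
    (hG : G.Preconnected) {f : V → α} (hf : ∀ u v, G.Adj u v → f u = f v) (u v : V) :
    f u = f v := by
  obtain ⟨walk⟩ := hG u v
  induction walk with
  | nil => rfl
  | cons hadj _ ih => exact (hf _ _ hadj).trans ih

section Coboundary

variable {G : SimpleGraph V} [Fintype G.edgeSet] {c : V → ZMod 2}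

theorem cobd_apply_of_adj {u v : V} (huv : G.Adj u v) :
    cobd G c ⟨s(u, v), huv⟩ = c u + c v := by
  have endpoints : univ.filter (fun w => w ∈ s(u, v)) = {u, v} := by ext w; simp
  change (∑ w : V, if w ∈ s(u, v) then c w else 0) = c u + c v
  rw [← sum_filter, endpoints, sum_pair huv.ne]

theorem eq_of_adj_of_cobd_eq_zero (hc : cobd G c = 0) {u v : V} (huv : G.Adj u v) :
    c u = c v := by
  rw [← CharTwo.add_eq_zero, ← cobd_apply_of_adj huv, hc, Pi.zero_apply]

theorem eq_zero_or_eq_one_of_cobd_eq_zero (hG : G.Preconnected) (hc : cobd G c = 0) :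
    c = 0 ∨ c = 1 := by
  have hconst := eq_of_preconnected_of_forall_adj hG fun _ _ => eq_of_adj_of_cobd_eq_zero hc
  refine or_iff_not_imp_left.mpr fun hne => ?_
  obtain ⟨u, hu⟩ := Function.ne_iff.mp hne
  funext v
  exact (hconst v u).trans (Fin.eq_one_of_ne_zero (c u) hu)

theorem eq_or_eq_add_one_of_cobd_eq {c' : V → ZMod 2} (hG : G.Preconnected)
    (h : cobd G c = cobd G c') : c' = c ∨ c' = c + 1 := by
  have hker : cobd G (c' - c) = 0 := by rw [map_sub, h, sub_self]
  simpa only [sub_eq_iff_eq_add', add_zero] using eq_zero_or_eq_one_of_cobd_eq_zero hG hker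

end Coboundary

theorem prod_mul_self_eq_one {ι M : Type*} [CommMonoid M] {ε : ι → M}
    {s : Finset ι} (hε : ∀ i ∈ s, ε i * ε i = 1) :
    (∏ i ∈ s, ε i) * ∏ i ∈ s, ε i = 1 := by
  rw [← prod_mul_distrib]
  exact prod_eq_one hε

section SignProd

variable {ι M : Type*} [Fintype ι] [CommMonoid M]

/-- The product `ε(c)` of the values of `ε` over the support of `c : 𝔽₂^ι`, the support being
encoded as `{i | c i = 1}`. It is the sign accompanying the byproduct operator `X_V(c)`. -/
def signProd (ε : ι → M) (c : ι → ZMod 2) : M :=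
  ∏ i ∈ univ.filter (fun i => c i = 1), ε i

theorem signProd_mul_signProd_add_one (ε : ι → M) (c : ι → ZMod 2) :
    signProd ε c * signProd ε (c + 1) = ∏ i, ε i := by
  have flip : ∀ a : ZMod 2, a + 1 = 1 ↔ ¬ a = 1 := by decide
  simp only [signProd, Pi.add_apply, Pi.one_apply, flip]
  exact prod_filter_mul_prod_filter_not univ (fun i => c i = 1) ε

theorem signProd_add_one {ε : ι → M} (hε : ∀ i, ε i * ε i = 1) (c : ι → ZMod 2) :
    signProd ε (c + 1) = signProd ε c * ∏ i, ε i := by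
  have hsq : signProd ε c * signProd ε c = 1 := prod_mul_self_eq_one fun i _ => hε i
  rw [← signProd_mul_signProd_add_one ε c, ← mul_assoc, hsq, one_mul]

end SignProd

theorem PXV_zero {V : Type*} : PXV (0 : V → ZMod 2) = 1 := by
  ext f s
  exact congrArg f (add_zero s)

theorem PXV_add {V : Type*} (a b : V → ZMod 2) : PXV (a + b) = PXV a * PXV b := by
  ext f s
  exact congrArg f (add_assoc s a b).symm

theorem PXV_mul_self {V : Type*} (a : V → ZMod 2) : PXV a * PXV a = 1 := by
  rw [← PXV_add, ZModModule.add_self, PXV_zero]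

theorem mul_one_add_smul_of_mul_self_eq_one {R A : Type*} [CommSemiring R] [Semiring A]
    [Algebra R A] {r : R} {x : A} (hr : r * r = 1) (hx : x * x = 1) :
    x * (1 + r • x) = r • (1 + r • x) := by
  rw [mul_add, mul_one, mul_smul_comm, hx, smul_add, smul_smul, hr, one_smul, add_comm]

theorem signProd_smul_PXV_add_one {V : Type*} [Fintype V] {ε : V → ℂ}
    (hε : ∀ v, ε v * ε v = 1) (c : V → ZMod 2) :
    signProd ε (c + 1) • (PXV (c + 1) * (1 + (∏ v, ε v) • PXV 1)) =
      signProd ε c • (PXV c * (1 + (∏ v, ε v) • PXV 1)) := by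
  have hσ : (∏ v, ε v) * ∏ v, ε v = 1 := prod_mul_self_eq_one fun v _ => hε v
  have habsorb := mul_one_add_smul_of_mul_self_eq_one hσ (PXV_mul_self (1 : V → ZMod 2))
  set σ := ∏ v, ε v
  calc signProd ε (c + 1) • (PXV (c + 1) * (1 + σ • PXV 1))
      = (signProd ε c * σ) • (PXV c * (PXV 1 * (1 + σ • PXV 1))) := by
        rw [signProd_add_one hε, PXV_add, mul_assoc]
    _ = (signProd ε c * σ) • (σ • (PXV c * (1 + σ • PXV 1))) := by
        rw [habsorb, mul_smul_comm]
    _ = signProd ε c • (PXV c * (1 + σ • PXV 1)) := by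
        rw [smul_smul, mul_assoc, hσ, mul_one]

/-- **Independence of the byproduct operator.** For a connected graph `G` on
a nonempty vertex set and outcomes `ε : V → {±1}` with `σ = ∏_v ε_v`: if
`δ c' = δ c''` then `c'' = c'` or `c'' = c' + 1_V`, and in both cases
`ε(c') X_V(c') ∘ (id + σ L_V) = ε(c'') X_V(c'') ∘ (id + σ L_V)`
where `L_V = X_V(1_V)`. -/
theorem byproduct_independence {V : Type*} [Fintype V] [DecidableEq V] [Nonempty V]
    (G : SimpleGraph V) [Fintype G.edgeSet] (hG : G.Connected)
    (ε : V → ℂ) (hε : ∀ v, ε v = 1 ∨ ε v = -1)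
    (c' c'' : V → ZMod 2) (h : cobd G c' = cobd G c'') :
    (c'' = c' ∨ c'' = c' + fun _ => 1) ∧
    (∏ v ∈ Finset.univ.filter (fun v => c' v = 1), ε v) •
        (PXV c' * (1 + (∏ v, ε v) • PXV (fun _ => (1 : ZMod 2))))
      = (∏ v ∈ Finset.univ.filter (fun v => c'' v = 1), ε v) •
        (PXV c'' * (1 + (∏ v, ε v) • PXV (fun _ => (1 : ZMod 2)))) := by
  have hsq : ∀ v, ε v * ε v = 1 := fun v => mul_self_eq_one_iff.mpr (hε v)
  have hc : c'' = c' ∨ c'' = c' + 1 := eq_or_eq_add_one_of_cobd_eq hG.preconnected h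
  refine ⟨hc, ?_⟩
  rcases hc with rfl | rfl
  · rfl
  · exact (signProd_smul_PXV_add_one hsq c').symm
end

section
/- With the deformed code construction: the deformed check matrices satisfy H'_X (H'_Z)ᵀ = 0 over 𝔽₂; that is, every Gauss row a_v = (1_v, δ1_v) is orthogonal to every deformed Z-check row (z, γ_z) and to every cycle row (0, p), and every padded original X-check row is orthogonal to every row of H'_Z. Hence the deformed code is a valid CSS code. -/
open Finset

variable {V : Type*} [Fintype V] [DecidableEq V]

/-- The Gauss's law row `a_v = (1_v, δ 1_v) ∈ 𝔽₂^n × 𝔽₂^E` of the deformed `X`-check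
matrix, for a vertex `v` of the graph `G` on the support of the logical `ℓ`. -/
def gaussRow {n : ℕ} {ℓ : Fin n → ZMod 2} (G : SimpleGraph {i : Fin n // ℓ i = 1})
    [Fintype G.edgeSet] (v : {i : Fin n // ℓ i = 1}) : (Fin n ⊕ G.edgeSet) → ZMod 2 :=
  Sum.elim (fun i => if i = v.1 then 1 else 0) (cobd G (fun w => if w = v then 1 else 0))

/-- The deformed `X`-check matrix `H'_X`: the rows of `H_X` padded with zeros on the edge
coordinates, together with the Gauss's law rows `a_v` for the vertices of `G`. -/
def deformedHX {n : ℕ} {rX : Type*} (HX : Matrix rX (Fin n) (ZMod 2))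
    {ℓ : Fin n → ZMod 2} (G : SimpleGraph {i : Fin n // ℓ i = 1}) [Fintype G.edgeSet] :
    Matrix (rX ⊕ {i : Fin n // ℓ i = 1}) (Fin n ⊕ G.edgeSet) (ZMod 2) :=
  Matrix.of (Sum.elim (fun j => Sum.elim (fun i => HX j i) 0) (fun v => gaussRow G v))

/-- The deformed `Z`-check matrix `H'_Z`: the rows `(z, γ_z)` for the rows `z` of `H_Z`,
together with the cycle rows `(0, p)` for the rows `p` of the cycle-basis matrix `N`. -/
def deformedHZ {n : ℕ} {rZ rN : Type*} (HZ : Matrix rZ (Fin n) (ZMod 2))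
    {ℓ : Fin n → ZMod 2} (G : SimpleGraph {i : Fin n // ℓ i = 1}) [Fintype G.edgeSet]
    (γ : rZ → G.edgeSet → ZMod 2) (N : rN → G.edgeSet → ZMod 2) :
    Matrix (rZ ⊕ rN) (Fin n ⊕ G.edgeSet) (ZMod 2) :=
  Matrix.of (Sum.elim (fun z => Sum.elim (fun i => HZ z i) (γ z)) (fun p => Sum.elim 0 (N p)))

/-!
Since `δ = ∂ᵀ`, the Gauss row `a_v` pairs with any `(x, y) ∈ 𝔽₂^n × 𝔽₂^E` to `x_v + (∂y)_v`.
So the Gauss rows are orthogonal to `(x, y)` exactly when `∂y` is the restriction of `x` to the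
support of `ℓ`, which for `(z, γ_z)` and `(0, p)` is the condition imposed on `γ_z` and `p`.
-/

open Matrix

theorem cobd_dotProduct (G : SimpleGraph V) [Fintype G.edgeSet] (c : V → ZMod 2)
    (y : G.edgeSet → ZMod 2) : cobd G c ⬝ᵥ y = c ⬝ᵥ bd G y := by
  simp only [dotProduct, cobd, bd, LinearMap.coe_mk, AddHom.coe_mk, sum_mul, mul_sum]
  rw [sum_comm]
  simp only [ite_mul, mul_ite, zero_mul, mul_zero]

section DeformedCode

variable {n : ℕ} {ℓ : Fin n → ZMod 2} (G : SimpleGraph {i : Fin n // ℓ i = 1})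
  [Fintype G.edgeSet]

theorem gaussRow_eq_sumElim_single (v : {i : Fin n // ℓ i = 1}) :
    gaussRow G v = Sum.elim (Pi.single v.1 1) (cobd G (Pi.single v 1)) := by
  simp only [gaussRow, ← Pi.single_apply]

theorem gaussRow_dotProduct_sumElim (v : {i : Fin n // ℓ i = 1}) (x : Fin n → ZMod 2)
    (y : G.edgeSet → ZMod 2) : gaussRow G v ⬝ᵥ Sum.elim x y = x v + bd G y v := by
  rw [gaussRow_eq_sumElim_single, sumElim_dotProduct_sumElim, cobd_dotProduct,
    single_one_dotProduct, single_one_dotProduct]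

theorem deformedHX_mul_deformedHZ_transpose {rX rZ rN : Type*}
    (HX : Matrix rX (Fin n) (ZMod 2)) (HZ : Matrix rZ (Fin n) (ZMod 2))
    (γ : rZ → G.edgeSet → ZMod 2) (N : rN → G.edgeSet → ZMod 2) :
    deformedHX HX G * (deformedHZ HZ G γ N)ᵀ =
      fromBlocks (HX * HZᵀ) 0
        (of fun (v : {i : Fin n // ℓ i = 1}) z => HZ z v + bd G (γ z) v)
        (of fun v p => bd G (N p) v) := by
  ext (j | v) (z | p)
  · change Sum.elim (HX j) 0 ⬝ᵥ Sum.elim (HZ z) (γ z) = HX j ⬝ᵥ HZ z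
    rw [sumElim_dotProduct_sumElim, zero_dotProduct, add_zero]
  · change Sum.elim (HX j) 0 ⬝ᵥ Sum.elim 0 (N p) = 0
    rw [sumElim_dotProduct_sumElim, dotProduct_zero, zero_dotProduct, add_zero]
  · exact gaussRow_dotProduct_sumElim G v (HZ z) (γ z)
  · exact (gaussRow_dotProduct_sumElim G v 0 (N p)).trans (zero_add _)

theorem deformed_code_is_CSS_general {rX rZ rN : Type*}
    (HX : Matrix rX (Fin n) (ZMod 2)) (HZ : Matrix rZ (Fin n) (ZMod 2))
    (γ : rZ → G.edgeSet → ZMod 2) (N : rN → G.edgeSet → ZMod 2) :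
    deformedHX HX G * (deformedHZ HZ G γ N)ᵀ = 0 ↔
      HX * HZᵀ = 0 ∧ (∀ z, bd G (γ z) = fun v => HZ z v.1) ∧ ∀ p, bd G (N p) = 0 := by
  have gauss_block : (of fun (v : {i : Fin n // ℓ i = 1}) z => HZ z v + bd G (γ z) v) = 0 ↔
      ∀ z, bd G (γ z) = fun v => HZ z v.1 := by
    simp only [← Matrix.ext_iff, of_apply, Matrix.zero_apply, CharTwo.add_eq_zero, funext_iff]
    exact forall_comm.trans (forall₂_congr fun _ _ => eq_comm)
  have cycle_block : (of fun v p => bd G (N p) v) = 0 ↔ ∀ p, bd G (N p) = 0 := by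
    simp only [← Matrix.ext_iff, of_apply, Matrix.zero_apply, funext_iff, Pi.zero_apply]
    exact forall_comm
  rw [deformedHX_mul_deformedHZ_transpose, ← fromBlocks_zero, fromBlocks_inj, gauss_block,
    cycle_block]
  simp only [true_and]

end DeformedCode

/-- The deformed check matrices satisfy `H'_X (H'_Z)ᵀ = 0` over `𝔽₂`:
every Gauss row `(1_v, δ1_v)` is orthogonal to every deformed `Z`-check row `(z, γ_z)`
and to every cycle row `(0, p)`, and every padded original `X`-check row is orthogonal to
every row of `H'_Z`. Hence the deformed code is a valid CSS code. -/
theorem deformed_code_is_CSS {n : ℕ} {rX rZ rN : Type*}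
    [Fintype rX] [Fintype rZ] [Fintype rN]
    (HX : Matrix rX (Fin n) (ZMod 2)) (HZ : Matrix rZ (Fin n) (ZMod 2))
    (hCSS : HX * HZ.transpose = 0)
    (ℓ : Fin n → ZMod 2) (hℓZ : HZ.mulVec ℓ = 0)
    (hℓX : ℓ ∉ LinearMap.range HX.vecMulLinear)
    (G : SimpleGraph {i : Fin n // ℓ i = 1}) [Fintype G.edgeSet] (hG : G.Connected)
    (γ : rZ → G.edgeSet → ZMod 2)
    (hγ : ∀ z : rZ, bd G (γ z) = fun v => HZ z v.1)
    (N : rN → G.edgeSet → ZMod 2)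
    (hN0 : ∀ p : rN, bd G (N p) = 0)
    (hNli : LinearIndependent (ZMod 2) N)
    (hNspan : ∀ y : G.edgeSet → ZMod 2, bd G y = 0 →
      y ∈ Submodule.span (ZMod 2) (Set.range N)) :
    deformedHX HX G * (deformedHZ HZ G γ N).transpose = 0 := by
  exact (deformed_code_is_CSS_general G HX HZ γ N).2 ⟨hCSS, hγ, hN0⟩
end

section
/- With the deformed code construction, assuming G is connected and ℓ is not in the row space of H_X: the rank of the deformed X-check matrix satisfies rank H'_X = rank H_X + |V|. In particular, the Gauss rows a_v are linearly independent from each other and from the padded rows of H_X. -/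
open Finset

variable {V : Type*} [Fintype V] [DecidableEq V]

/-!
Write `W` for the row space of `H_X`, and extend cochains on `V` by zero to `𝔽₂^n`. The combination
of the Gauss rows with coefficients `c` is `(c, δ c)`; its first component shows that the Gauss rows
are linearly independent, and it lies in the span of the padded rows of `H_X` exactly when `δ c = 0`
and `c ∈ W`. Hence `rank H'_X = rank H_X + |V| - dim (W ∩ ker δ)` for every graph. If `G` is
connected, `ker δ` is spanned by the all-ones cochain, whose extension by zero is `ℓ`, so the
intersection vanishes when `ℓ ∉ W`.
-/

open Matrix Module Function

section RowSpace

variable {R K m₁ m₂ n k : Type*} [Semiring R] [Field K] [Fintype m₁] [Fintype m₂]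

theorem range_vecMulLinear_fromRows (A : Matrix m₁ n R) (B : Matrix m₂ n R) :
    LinearMap.range (fromRows A B).vecMulLinear =
      LinearMap.range A.vecMulLinear ⊔ LinearMap.range B.vecMulLinear := by
  simp only [range_vecMulLinear, ← Submodule.span_union]
  exact congrArg _ (Set.Sum.elim_range A B)

theorem finrank_range_vecMulLinear [Fintype n] (A : Matrix m₁ n K) :
    finrank K (LinearMap.range A.vecMulLinear) = A.rank := by
  rw [range_vecMulLinear, rank_eq_finrank_span_row]

theorem rank_fromRows_add_finrank_inf [Fintype n] (A : Matrix m₁ n K) (B : Matrix m₂ n K) :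
    (fromRows A B).rank +
        finrank K ↥(LinearMap.range A.vecMulLinear ⊓ LinearMap.range B.vecMulLinear) =
      A.rank + B.rank := by
  simp only [← finrank_range_vecMulLinear]
  rw [range_vecMulLinear_fromRows, Submodule.finrank_sup_add_finrank_inf_eq]

variable (R n k) in
/-- Padding a vector indexed by `n` with zeros on the additional coordinates `k`. -/
def zeroPad : (n → R) →ₗ[R] (n ⊕ k → R) where
  toFun x := Sum.elim x 0
  map_add' x y := by simp [← Sum.elim_add_add]
  map_smul' r x := by ext (_ | _) <;> simp

@[simp]
theorem zeroPad_apply (x : n → R) : zeroPad R n k x = Sum.elim x 0 := rfl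

theorem zeroPad_injective : Injective (zeroPad R n k) :=
  fun _ _ h => congrArg (· ∘ Sum.inl) h

theorem range_vecMulLinear_fromCols_zero (A : Matrix m₁ n R) :
    LinearMap.range (fromCols A (0 : Matrix m₁ k R)).vecMulLinear =
      (LinearMap.range A.vecMulLinear).map (zeroPad R n k) := by
  rw [← LinearMap.range_comp]
  congr 1
  ext1
  simp [vecMul_fromCols]

theorem finrank_map_zeroPad (p : Submodule R (n → R)) :
    finrank R (p.map (zeroPad R n k)) = finrank R p :=
  (p.equivMapOfInjective _ zeroPad_injective).finrank_eq.symm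

theorem rank_fromCols_zero {S m : Type*} [CommRing S] [Fintype n] [Fintype k] (A : Matrix m n S) :
    (fromCols A (0 : Matrix m k S)).rank = A.rank := by
  have range_eq : LinearMap.range (fromCols A (0 : Matrix m k S)).mulVecLin =
      LinearMap.range A.mulVecLin := by
    refine le_antisymm ?_ ?_
    · rintro _ ⟨x, rfl⟩
      exact ⟨x ∘ Sum.inl, by simp [fromCols_mulVec]⟩
    · rintro _ ⟨x, rfl⟩
      exact ⟨Sum.elim x 0, by simp [fromCols_mulVec]⟩
  rw [rank, rank, range_eq]

end RowSpace

section Coboundary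

variable (G : SimpleGraph V) [Fintype G.edgeSet]

theorem cobd_apply_mk (c : V → ZMod 2) {a b : V} (hab : G.Adj a b) :
    cobd G c ⟨s(a, b), hab⟩ = c a + c b := by
  have endpoints : univ.filter (· ∈ s(a, b)) = {a, b} := by ext; simp
  change (∑ v, if v ∈ s(a, b) then c v else 0) = _
  rw [← sum_filter, endpoints, sum_pair hab.ne]

theorem cobd_eq_zero_iff {c : V → ZMod 2} :
    cobd G c = 0 ↔ ∀ ⦃a b⦄, G.Adj a b → c a = c b := by
  constructor
  · intro hc a b hab
    rw [← CharTwo.add_eq_zero, ← cobd_apply_mk G c hab, hc, Pi.zero_apply]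
  · intro hc
    ext ⟨⟨a, b⟩, hab⟩
    exact (cobd_apply_mk G c hab).trans (CharTwo.add_eq_zero.mpr (hc hab))

variable {G} in
theorem ker_cobd_of_connected (hG : G.Connected) :
    LinearMap.ker (cobd G) = Submodule.span (ZMod 2) {1} := by
  ext c
  rw [LinearMap.mem_ker, cobd_eq_zero_iff, Submodule.mem_span_singleton]
  constructor
  · intro hc
    obtain ⟨root⟩ := hG.nonempty
    refine ⟨c root, funext fun v => ?_⟩
    obtain ⟨walk⟩ := hG.preconnected root v
    rw [Pi.smul_apply, Pi.one_apply, smul_eq_mul, mul_one]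
    induction walk with
    | nil => rfl
    | cons hab _ ih => exact (hc hab).trans ih
  · rintro ⟨r, rfl⟩ a b -
    rfl

end Coboundary

section GaussRows

variable {n : ℕ} {rX : Type*} {ℓ : Fin n → ZMod 2}

variable (ℓ) in
/-- Extension by zero `𝔽₂^V → 𝔽₂^n` of cochains on the support `V` of `ℓ`. -/
noncomputable def extendSupport :
    ({i : Fin n // ℓ i = 1} → ZMod 2) →ₗ[ZMod 2] (Fin n → ZMod 2) :=
  ExtendByZero.linearMap (ZMod 2) Subtype.val

theorem extendSupport_apply_of_eq_one (c : {i : Fin n // ℓ i = 1} → ZMod 2) {i : Fin n}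
    (hi : ℓ i = 1) : extendSupport ℓ c i = c ⟨i, hi⟩ :=
  Subtype.val_injective.extend_apply c 0 ⟨i, hi⟩

theorem extendSupport_apply_of_ne_one (c : {i : Fin n // ℓ i = 1} → ZMod 2) {i : Fin n}
    (hi : ℓ i ≠ 1) : extendSupport ℓ c i = 0 :=
  extend_val_apply' hi

theorem extendSupport_injective : Injective (extendSupport ℓ) :=
  extend_injective Subtype.val_injective (0 : Fin n → ZMod 2)

theorem extendSupport_one : extendSupport ℓ 1 = ℓ := by
  ext i
  by_cases hi : ℓ i = 1
  · rw [extendSupport_apply_of_eq_one _ hi, hi, Pi.one_apply]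
  · have zero_of_ne_one : ∀ a : ZMod 2, a ≠ 1 → a = 0 := by decide
    rw [extendSupport_apply_of_ne_one _ hi, zero_of_ne_one _ hi]

variable (G : SimpleGraph {i : Fin n // ℓ i = 1}) [Fintype G.edgeSet]

theorem vecMul_gaussRow (c : {i : Fin n // ℓ i = 1} → ZMod 2) :
    c ᵥ* of (gaussRow G) = Sum.elim (extendSupport ℓ c) (cobd G c) := by
  ext (i | e)
  · change ∑ v, c v * (if i = v.1 then 1 else 0) = extendSupport ℓ c i
    by_cases hi : ℓ i = 1
    · rw [extendSupport_apply_of_eq_one c hi, sum_eq_single ⟨i, hi⟩] <;> grind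
    · rw [extendSupport_apply_of_ne_one c hi]
      exact sum_eq_zero fun v _ => by grind
  · change ∑ v, c v * cobd G (fun w => if w = v then 1 else 0) e = cobd G c e
    rw [(cobd G).pi_apply_eq_sum_univ c, Finset.sum_apply]
    simp only [Pi.smul_apply, smul_eq_mul, eq_comm]

theorem linearIndependent_gaussRow : LinearIndependent (ZMod 2) (gaussRow G) := by
  refine vecMul_injective_iff.mp fun c d hcd => ?_
  change c ᵥ* of (gaussRow G) = d ᵥ* of (gaussRow G) at hcd
  rw [vecMul_gaussRow, vecMul_gaussRow] at hcd
  exact extendSupport_injective (congrArg (· ∘ Sum.inl) hcd)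

theorem rank_gaussRow : (of (gaussRow G)).rank = Fintype.card {i : Fin n // ℓ i = 1} :=
  (linearIndependent_gaussRow G).rank_matrix

theorem map_zeroPad_inf_range_gaussRow (p : Submodule (ZMod 2) (Fin n → ZMod 2)) :
    p.map (zeroPad (ZMod 2) (Fin n) G.edgeSet) ⊓ LinearMap.range (of (gaussRow G)).vecMulLinear =
      (p ⊓ (LinearMap.ker (cobd G)).map (extendSupport ℓ)).map
        (zeroPad (ZMod 2) (Fin n) G.edgeSet) := by
  ext y
  constructor
  · rintro ⟨⟨x, hx, rfl⟩, c, hc⟩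
    rw [vecMulLinear_apply, vecMul_gaussRow, zeroPad_apply] at hc
    exact ⟨x, ⟨hx, c, congrArg (· ∘ Sum.inr) hc, congrArg (· ∘ Sum.inl) hc⟩, rfl⟩
  · rintro ⟨_, ⟨hx, c, hc, rfl⟩, rfl⟩
    refine ⟨⟨_, hx, rfl⟩, c, ?_⟩
    rw [vecMulLinear_apply, vecMul_gaussRow, zeroPad_apply, LinearMap.mem_ker.mp hc]

theorem deformedHX_eq_fromRows (HX : Matrix rX (Fin n) (ZMod 2)) :
    deformedHX HX G = fromRows (fromCols HX 0) (of (gaussRow G)) := by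
  ext (_ | _) (_ | _) <;> rfl

variable {G} in
theorem disjoint_map_extendSupport_ker_cobd {p : Submodule (ZMod 2) (Fin n → ZMod 2)}
    (hℓ : ℓ ∉ p) (hG : G.Connected) :
    Disjoint p ((LinearMap.ker (cobd G)).map (extendSupport ℓ)) := by
  rw [ker_cobd_of_connected hG, Submodule.map_span, Set.image_singleton, extendSupport_one]
  exact Submodule.disjoint_span_singleton_of_notMem hℓ

theorem deformed_HX_rank_general [Fintype rX] (HX : Matrix rX (Fin n) (ZMod 2)) :
    (deformedHX HX G).rank +
        finrank (ZMod 2) ↥(LinearMap.range HX.vecMulLinear ⊓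
          (LinearMap.ker (cobd G)).map (extendSupport ℓ)) =
      HX.rank + Fintype.card {i : Fin n // ℓ i = 1} := by
  have key := rank_fromRows_add_finrank_inf (fromCols HX 0) (of (gaussRow G))
  rwa [← deformedHX_eq_fromRows, range_vecMulLinear_fromCols_zero, map_zeroPad_inf_range_gaussRow,
    finrank_map_zeroPad, rank_fromCols_zero, rank_gaussRow] at key

end GaussRows

/-- For a connected graph `G` and a logical `ℓ` not in the row space of
`H_X`, the rank of the deformed `X`-check matrix satisfies
`rank H'_X = rank H_X + |V|`: the Gauss rows are linearly independent from each other and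
from the padded rows of `H_X`. -/
theorem deformed_HX_rank {n : ℕ} {rX rZ rN : Type*}
    [Fintype rX] [Fintype rZ] [Fintype rN]
    (HX : Matrix rX (Fin n) (ZMod 2)) (HZ : Matrix rZ (Fin n) (ZMod 2))
    (hCSS : HX * HZ.transpose = 0)
    (ℓ : Fin n → ZMod 2) (hℓZ : HZ.mulVec ℓ = 0)
    (hℓX : ℓ ∉ LinearMap.range HX.vecMulLinear)
    (G : SimpleGraph {i : Fin n // ℓ i = 1}) [Fintype G.edgeSet] (hG : G.Connected) :
    (deformedHX HX G).rank = HX.rank + Fintype.card {i : Fin n // ℓ i = 1} := by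
  have key := deformed_HX_rank_general G HX
  rwa [(disjoint_map_extendSupport_ker_cobd hℓX hG).eq_bot, finrank_bot, add_zero] at key
end
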